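/- Every α¹-derivation of the q-deformed W(2,2) algebra is zero: if D: W_q → W_q is a linear map satisfying D ∘ α = α ∘ D and D([x,y]_q) = [α(x), D(y)]_q − [α(y), D(x)]_q for all x, y ∈ W_q, then D = 0. -/

import Mathlib

noncomputable section

/-- The underlying space of the q-deformed W(2,2) algebra: formal ℂ-linear
combinations of the basis `{L_n, M_n : n ∈ ℤ}`. -/
abbrev Wq : Type := (ℤ →₀ ℂ) × (ℤ →₀ ℂ)

/-- The basis vector `L_n`. -/
def Lb (n : ℤ) : Wq := (Finsupp.single n 1, 0)

/-- The basis vector `M_n`. -/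
def Mb (n : ℤ) : Wq := (0, Finsupp.single n 1)

/-- The q-number `[n]_q = (q^n - q^(-n))/(q - q⁻¹)`. -/
def qnum (q : ℂ) (n : ℤ) : ℂ := (q ^ n - q ^ (-n)) / (q - q⁻¹)

/-- `⟨n⟩_q = q^n + q^(-n)`. -/
def qang (q : ℂ) (n : ℤ) : ℂ := q ^ n + q ^ (-n)

lemma qpow_ne (q : ℂ) (hq0 : q ≠ 0) (hq1 : ∀ k : ℤ, 1 ≤ k → q ^ k ≠ 1) (k : ℤ) (hk : k ≠ 0) :
    q ^ k ≠ 1 := by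
  rcases lt_or_gt_of_ne hk with h | h
  · intro h1
    apply hq1 (-k) (by omega)
    rw [zpow_neg, h1, inv_one]
  · exact hq1 k (by omega)

lemma qnum_neg' (q : ℂ) (k : ℤ) : qnum q (-k) = - qnum q k := by
  unfold qnum
  rw [neg_neg]; ring

lemma qang_neg' (q : ℂ) (k : ℤ) : qang q (-k) = qang q k := by
  unfold qang
  rw [neg_neg]; ring

lemma qnum_ne (q : ℂ) (hq0 : q ≠ 0) (hq1 : ∀ k : ℤ, 1 ≤ k → q ^ k ≠ 1) (k : ℤ) (hk : k ≠ 0) :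
    qnum q k ≠ 0 := by
  have key : ∀ j : ℤ, j ≠ 0 → q ^ j - q ^ (-j) ≠ 0 := by
    intro j hj h
    apply qpow_ne q hq0 hq1 (j + j) (by omega)
    rw [zpow_add₀ hq0]
    nth_rewrite 1 [sub_eq_zero.mp h]
    rw [← zpow_add₀ hq0]; simp
  unfold qnum
  apply div_ne_zero (key k hk)
  simpa using key 1 one_ne_zero

lemma qang_inj (q : ℂ) (hq0 : q ≠ 0) (hq1 : ∀ k : ℤ, 1 ≤ k → q ^ k ≠ 1) (k m : ℤ)
    (h : qang q k = qang q m) : k = m ∨ k = -m := by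
  by_contra hc
  push Not at hc
  have h1 := qpow_ne q hq0 hq1 (k - m) (by omega)
  have h2 := qpow_ne q hq0 hq1 (k + m) (by omega)
  rw [zpow_sub₀ hq0] at h1
  rw [zpow_add₀ hq0] at h2
  unfold qang at h
  rw [zpow_neg, zpow_neg] at h
  have hx : q ^ k ≠ 0 := zpow_ne_zero _ hq0
  have hy : q ^ m ≠ 0 := zpow_ne_zero _ hq0
  generalize q ^ k = x at *
  generalize q ^ m = y at *
  have h1' : x - y ≠ 0 := by
    intro h0
    apply h1
    rw [sub_eq_zero.mp h0, div_self hy]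
  field_simp at h
  have : (x - y) * (x * y - 1) = 0 := by linear_combination h
  rcases mul_eq_zero.mp this with h3 | h3
  · exact h1' h3
  · exact h2 (by linear_combination h3)

lemma exists_good (q : ℂ) (hq0 : q ≠ 0) :
    ∃ m : ℤ, m ≠ 0 ∧ 1 + 2 * (qang q m) ^ 2 ≠ 0 := by
  by_contra hc
  push Not at hc
  have h1 := hc 1 (by norm_num)
  have h2 := hc 2 (by norm_num)
  have e : qang q 2 = (qang q 1) ^ 2 - 2 := by
    unfold qang
    have : q ^ (2:ℤ) = q ^ 2 := by norm_cast
    rw [zpow_neg, zpow_neg, this, zpow_one]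
    field_simp
    ring
  rw [e] at h2
  have h3 : (qang q 1) ^ 2 = -1/2 := by linear_combination h1 / 2
  rw [h3] at h2
  norm_num at h2

/-- Linear maps on `Wq` acting diagonally on the basis act diagonally on coefficients. -/
lemma diag_coeff (T : Wq →ₗ[ℂ] Wq) (f : ℤ → ℂ) (hL : ∀ n, T (Lb n) = f n • Lb n)
    (hM : ∀ n, T (Mb n) = f n • Mb n) (v : Wq) (k : ℤ) :
    (T v).1 k = f k * v.1 k ∧ (T v).2 k = f k * v.2 k := by
  have hA : ∀ a : ℤ →₀ ℂ, (T (a, 0)).1 k = f k * a k ∧ (T (a, 0)).2 k = 0 := by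
    intro a
    induction a using Finsupp.induction_linear with
    | zero => rw [show ((0 : ℤ →₀ ℂ), (0 : ℤ →₀ ℂ)) = 0 from rfl, map_zero]; simp
    | add a b ha hb =>
      rw [show ((a + b : ℤ →₀ ℂ), (0 : ℤ →₀ ℂ)) = (a, 0) + (b, 0) by simp, map_add]
      simp [ha.1, ha.2, hb.1, hb.2, mul_add]
    | single n c =>
      rw [show ((Finsupp.single n c : ℤ →₀ ℂ), (0 : ℤ →₀ ℂ)) = c • Lb n by simp [Lb], map_smul, hL]
      by_cases h : n = k
      · subst h; simp [Lb, mul_comm]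
      · simp [Lb, h, Finsupp.single_apply]
  have hB : ∀ a : ℤ →₀ ℂ, (T (0, a)).2 k = f k * a k ∧ (T (0, a)).1 k = 0 := by
    intro a
    induction a using Finsupp.induction_linear with
    | zero => rw [show ((0 : ℤ →₀ ℂ), (0 : ℤ →₀ ℂ)) = 0 from rfl, map_zero]; simp
    | add a b ha hb =>
      rw [show ((0 : ℤ →₀ ℂ), (a + b : ℤ →₀ ℂ)) = (0, a) + (0, b) by simp, map_add]
      simp [ha.1, ha.2, hb.1, hb.2, mul_add]
    | single n c =>
      rw [show ((0 : ℤ →₀ ℂ), (Finsupp.single n c : ℤ →₀ ℂ)) = c • Mb n by simp [Mb], map_smul, hM]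
      by_cases h : n = k
      · subst h; simp [Mb, mul_comm]
      · simp [Mb, h, Finsupp.single_apply]
  obtain ⟨a, b⟩ := v
  rw [show (a, b) = ((a, 0) : Wq) + ((0, b) : Wq) by simp, map_add]
  simp [(hA a).1, (hA a).2, (hB b).1, (hB b).2]

lemma linmap_eq_zero (T : Wq →ₗ[ℂ] Wq) (hL : ∀ n, T (Lb n) = 0) (hM : ∀ n, T (Mb n) = 0) :
    T = 0 := by
  ext v k
  all_goals
    have h1 := hL v
    have h2 := hM v
    simp only [Lb, Mb] at h1 h2
    simp [h1, h2]

/-- Every `α¹`-derivation of the q-deformed W(2,2) algebra is zero. -/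
theorem alpha_one_derivation_eq_zero (q : ℂ) (hq0 : q ≠ 0)
    (hq1 : ∀ k : ℤ, 1 ≤ k → q ^ k ≠ 1)
    (br : Wq →ₗ[ℂ] Wq →ₗ[ℂ] Wq) (α : Wq →ₗ[ℂ] Wq)
    (hLL : ∀ n m : ℤ, br (Lb n) (Lb m) = qnum q (m - n) • Lb (m + n))
    (hLM : ∀ n m : ℤ, br (Lb n) (Mb m) = qnum q (m - n) • Mb (m + n))
    (hML : ∀ m n : ℤ, br (Mb m) (Lb n) = qnum q (n - m) • Mb (m + n))
    (hMM : ∀ n m : ℤ, br (Mb n) (Mb m) = 0)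
    (hαL : ∀ n : ℤ, α (Lb n) = qang q n • Lb n)
    (hαM : ∀ n : ℤ, α (Mb n) = qang q n • Mb n)
    (D : Wq →ₗ[ℂ] Wq)
    (hDα : ∀ x : Wq, D (α x) = α (D x))
    (hDder : ∀ x y : Wq, D (br x y) = br (α x) (D y) - br (α y) (D x)) :
    D = 0 := by
  have hbrL0 := diag_coeff (br (Lb 0)) (qnum q) (fun n => by simpa using hLL 0 n)
    (fun n => by simpa using hLM 0 n)
  have hαc := diag_coeff α (qang q) hαL hαM
  have hne := qnum_ne q hq0 hq1
  -- eigenvector criterion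
  have K : ∀ (m : ℤ) (w : Wq), m ≠ 0 → α w = qang q m • w →
      qnum q m • w = (2 : ℂ) • br (Lb 0) w → w = 0 := by
    intro m w hm h1 h2
    have scal : ∀ (k : ℤ) (x : ℂ), qang q m * x = qang q k * x →
        qnum q m * x = 2 * (qnum q k * x) → x = 0 := by
      intro k x e1 e2
      by_contra hx
      have e3 := mul_right_cancel₀ hx e1
      rcases qang_inj q hq0 hq1 _ _ e3.symm with h | h
      · subst h
        exact mul_ne_zero (hne _ hm) hx (by linear_combination -e2)
      · subst h
        rw [qnum_neg'] at e2
        exact mul_ne_zero (hne _ hm) hx (by linear_combination e2 / 3)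
    apply Prod.ext
    · ext k
      apply scal k
      · rw [← (hαc w k).1, h1]; simp
      · rw [← (hbrL0 w k).1]
        simpa using congrArg (fun z : Wq => z.1 k) h2
    · ext k
      apply scal k
      · rw [← (hαc w k).2, h1]; simp
      · rw [← (hbrL0 w k).2]
        simpa using congrArg (fun z : Wq => z.2 k) h2
  -- D L_0
  obtain ⟨a, c, hu⟩ : ∃ a c : ℂ, D (Lb 0) = a • Lb 0 + c • Mb 0 := by
    have h1 : α (D (Lb 0)) = qang q 0 • D (Lb 0) := by
      rw [← hDα, hαL, map_smul]
    have scal : ∀ (k : ℤ) (x : ℂ), k ≠ 0 → qang q 0 * x = qang q k * x → x = 0 := by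
      intro k x hk e1
      by_contra hx
      have e3 := mul_right_cancel₀ hx e1
      rcases qang_inj q hq0 hq1 _ _ e3.symm with h | h <;> omega
    refine ⟨(D (Lb 0)).1 0, (D (Lb 0)).2 0, ?_⟩
    apply Prod.ext
    · ext k
      by_cases hk : k = 0
      · subst hk; simp [Lb, Mb]
      · rw [scal k ((D (Lb 0)).1 k) hk (by rw [← (hαc _ k).1, h1]; simp)]
        simp [Lb, Mb, Finsupp.single_apply, Ne.symm hk]
    · ext k
      by_cases hk : k = 0
      · subst hk; simp [Lb, Mb]
      · rw [scal k ((D (Lb 0)).2 k) hk (by rw [← (hαc _ k).2, h1]; simp)]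
        simp [Lb, Mb, Finsupp.single_apply, Ne.symm hk]
  have q0 : qang q 0 = 2 := by simp [qang]; norm_num
  have hDL : ∀ m : ℤ, m ≠ 0 → D (Lb m) = -(qang q m • (a • Lb m + c • Mb m)) := by
    intro m hm
    rw [← add_eq_zero_iff_eq_neg]
    apply K m _ hm
    · rw [map_add, ← hDα, hαL]
      simp only [map_smul, map_add, hαL, hαM]
      module
    · have h := hDder (Lb 0) (Lb m)
      simp only [hLL, hαL, hu, map_smul, map_add, LinearMap.smul_apply, hLM, q0] at h
      simp only [sub_zero, zero_sub, add_zero, zero_add, qnum_neg'] at h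
      simp only [map_smul, map_add, hLL, hLM, sub_zero, add_zero]
      rw [smul_add, h]
      module
  have hu0 : D (Lb 0) = 0 := by
    obtain ⟨m, hm, hg⟩ := exists_good q hq0
    have h := hDder (Lb m) (Lb (-m))
    simp only [hLL, hαL, hDL m hm, hDL (-m) (neg_ne_zero.mpr hm), map_smul, map_add, map_neg,
      LinearMap.smul_apply, hLM, qang_neg'] at h
    rw [show -m - m = -(m + m) by ring, show m - -m = m + m by ring, neg_add_cancel,
      add_neg_cancel, qnum_neg', hu] at h
    have h2 : (qnum q (m + m) * (1 + 2 * qang q m ^ 2)) • (a • Lb 0 + c • Mb 0) = 0 := by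
      rw [← sub_eq_zero] at h
      rw [← neg_eq_zero, ← h]
      module
    rw [hu]
    exact (smul_eq_zero.mp h2).resolve_left (mul_ne_zero (hne _ (by omega)) hg)
  have hac : a • Lb 0 + c • Mb 0 = 0 := by rw [← hu, hu0]
  have ha : a = 0 := by simpa [Lb, Mb] using congrArg (fun z : Wq => z.1 0) hac
  have hc : c = 0 := by simpa [Lb, Mb] using congrArg (fun z : Wq => z.2 0) hac
  have hDL' : ∀ m : ℤ, D (Lb m) = 0 := by
    intro m
    by_cases hm : m = 0
    · rw [hm, hu0]
    · rw [hDL m hm, ha, hc]; simp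
  have hDM : ∀ m : ℤ, m ≠ 0 → D (Mb m) = 0 := by
    intro m hm
    apply K m _ hm
    · rw [← hDα, hαM, map_smul]
    · have h := hDder (Lb 0) (Mb m)
      simpa [hLM, hαL, hDL', q0] using h
  apply linmap_eq_zero D hDL'
  intro m
  by_cases hm : m = 0
  · subst hm
    have h := hDder (Lb 1) (Mb (-1))
    rw [hLM, hDM (-1) (by norm_num), hDL', map_zero, map_zero, sub_zero, map_smul] at h
    exact (smul_eq_zero.mp h).resolve_left (hne _ (by norm_num))
  · exact hDM m hm
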